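/- arXiv:1705.06838 — 2 statements merged into one kernel-verified Lean document; each statement's English description precedes it below -/
import Mathlib

section
/- For every r ≥ 1 and every function f : N^r → X whose image {f(z) : z ∈ N^r} is finite, there exists an infinite subset H = {h_0, h_1, ...} ⊆ N such that f is constant on each order-equivalence class of H^r. -/
open scoped Classical

/-- The maximum coordinate of a `k`-tuple of nonnegative integers. -/
def maxv {k : ℕ} (z : Fin k → ℕ) : ℕ := Finset.univ.sup z

/-- The minimum coordinate of a `k`-tuple of nonnegative integers. -/
noncomputable def minv {k : ℕ} (z : Fin k → ℕ) : ℕ := sInf (Set.range z)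

/-- A directed graph `(N^k, Θ)` is downward directed if every edge `(x, y)`
satisfies `max(x) > max(y)`. -/
def Downward {k : ℕ} (Θ : Set ((Fin k → ℕ) × (Fin k → ℕ))) : Prop :=
  ∀ e ∈ Θ, maxv e.2 < maxv e.1

/-- Two `k`-tuples are order equivalent if they have the same order type:
corresponding coordinates compare the same way. -/
def OrdEquiv {k : ℕ} (x y : Fin k → ℕ) : Prop :=
  ∀ i j : Fin k, (x i < x j ↔ y i < y j) ∧ (x i = x j ↔ y i = y j)

/-!
Ramsey's theorem for the finite subsets of an infinite type is proved with a nonprincipal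
ultrafilter `U`. Starting from a colouring `c`, let `D 0 = c` and let `D (k + 1) s` be the
`U`-limit of `D k (insert a s)` in the variable `a`. Call `s` generic if
`D k s = D (k + s.card) ∅` for all relevant `k`: the empty set is generic, and `U`-almost every
point may be added to a generic set. Hence an infinite set exists all of whose finite subsets are
generic, and on generic sets `c s = D 0 s` depends on `s.card` only.

For tuples, colour a finite set `s` by the function sending an order type to the set of values of
`f` at tuples with that order type and range `s`. There is at most one such tuple, and order
equivalent tuples have ranges of the same size, so `f` is constant on each order type over a
homogeneous set.
-/

section Ramsey

open Filter Set

variable {α K : Type*}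

theorem exists_infinite_forall_finset_subset [DecidableEq α] {l : Filter α} [l.NeBot]
    (hl : l ≤ cofinite) {P : Finset α → Prop} (h_empty : P ∅)
    (h_insert : ∀ s, P s → ∀ᶠ a in l, P (insert a s)) :
    ∃ H : Set α, H.Infinite ∧ ∀ s : Finset α, ↑s ⊆ H → P s := by
  let F : Set (Set α) := {H | ∀ s : Finset α, ↑s ⊆ H → P s}
  have finiteCharacter : Order.IsOfFiniteCharacter F := fun H =>
    ⟨fun hH T hTH _ s hsT => hH s (hsT.trans hTH),
      fun hH s hsH => hH s hsH s.finite_toSet s Subset.rfl⟩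
  have empty_mem : ∅ ∈ F := fun s hs => by
    rwa [Finset.coe_eq_empty.1 (subset_empty_iff.1 hs)]
  obtain ⟨H, -, hH⟩ := finiteCharacter.exists_maximal empty_mem
  refine ⟨H, fun hfin => ?_, hH.prop⟩
  lift H to Finset α using hfin
  have extends_subsets : ∀ᶠ a in l, ∀ s ∈ H.powerset, P (insert a s) :=
    (eventually_all_finset _).2 fun s hs =>
      h_insert s (hH.prop s (Finset.coe_subset.2 (Finset.mem_powerset.1 hs)))
  have fresh : ∀ᶠ a in l, a ∉ H := hl H.finite_toSet.compl_mem_cofinite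
  obtain ⟨a, ha, haH⟩ := (extends_subsets.and fresh).exists
  have insert_mem : (insert a H : Set α) ∈ F := fun s hs => by
    rw [← Finset.coe_insert, Finset.coe_subset] at hs
    by_cases has : a ∈ s
    · rw [← Finset.insert_erase has]
      exact ha _ (Finset.mem_powerset.2 (Finset.subset_insert_iff.1 hs))
    · exact hH.prop s (Finset.coe_subset.2 ((Finset.subset_insert_iff_of_notMem has).1 hs))
  exact haH (hH.le_of_ge insert_mem (subset_insert a H) (mem_insert a H))

theorem exists_iterated_ultralimit [DecidableEq α] [Finite K] (U : Ultrafilter α)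
    (c : Finset α → K) :
    ∃ D : ℕ → Finset α → K, D 0 = c ∧ ∀ k s, ∀ᶠ a in U, D k (insert a s) = D (k + 1) s := by
  have exists_limit (g : α → K) : ∃ b, ∀ᶠ a in U, g a = b :=
    Ultrafilter.eventually_exists_iff.1 (Eventually.of_forall fun a => ⟨g a, rfl⟩)
  choose L hL using exists_limit
  refine ⟨fun k => (fun d s => L fun a => d (insert a s))^[k] c, rfl, fun k s => ?_⟩
  simp only [Function.iterate_succ_apply']
  exact hL _

theorem exists_infinite_homogeneous [Infinite α] [Finite K] (c : Finset α → K) (r : ℕ) :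
    ∃ H : Set α, H.Infinite ∧ ∀ s t : Finset α, ↑s ⊆ H → ↑t ⊆ H → s.card = t.card →
      s.card ≤ r → c s = c t := by
  obtain ⟨D, rfl, hD⟩ := exists_iterated_ultralimit (hyperfilter α) c
  let Generic (s : Finset α) : Prop := ∀ k, k + s.card ≤ r → D k s = D (k + s.card) ∅
  have generic_empty : Generic ∅ := fun k _ => by simp
  have generic_insert (s : Finset α) (hs : Generic s) :
      ∀ᶠ a in hyperfilter α, Generic (insert a s) := by
    have limit_attained : ∀ᶠ a in hyperfilter α, ∀ k ∈ Finset.range r,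
        D k (insert a s) = D (k + 1) s :=
      (eventually_all_finset _).2 fun k _ => hD k s
    have fresh : ∀ᶠ a in hyperfilter α, a ∉ s := s.finite_toSet.compl_mem_hyperfilter
    filter_upwards [limit_attained, fresh] with a ha has k hk
    rw [Finset.card_insert_of_notMem has] at hk ⊢
    rw [ha k (Finset.mem_range.2 (by lia)), hs (k + 1) (by lia)]
    congr 1
    lia
  obtain ⟨H, hinf, hH⟩ :=
    exists_infinite_forall_finset_subset hyperfilter_le_cofinite generic_empty generic_insert
  refine ⟨H, hinf, fun s t hs ht hst hr => ?_⟩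
  rw [hH s hs 0 (by lia), hH t ht 0 (by lia), hst]

end Ramsey

section OrderPattern

open Set

variable {ι α β : Type*}

/-- The order type of a tuple, encoded as the strict comparison relation that it induces on its
index set. Over a linear order this also records which coordinates coincide. -/
def orderPattern [LT α] (x : ι → α) : ι → ι → Prop := fun i j => x i < x j

theorem orderPattern_eq_of_ordEquiv {k : ℕ} {x y : Fin k → ℕ} (h : OrdEquiv x y) :
    orderPattern x = orderPattern y :=
  funext₂ fun i j => propext (h i j).1

theorem lt_iff_lt_of_orderPattern_eq [LT α] [LT β] {x : ι → α} {y : ι → β}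
    (h : orderPattern x = orderPattern y) (i j : ι) : x i < x j ↔ y i < y j :=
  iff_of_eq (congrFun₂ h i j)

variable [LinearOrder α] [LinearOrder β]

theorem eq_iff_eq_of_orderPattern_eq {x : ι → α} {y : ι → β}
    (h : orderPattern x = orderPattern y) (i j : ι) : x i = x j ↔ y i = y j := by
  simp only [le_antisymm_iff, ← not_lt, lt_iff_lt_of_orderPattern_eq h]

theorem ncard_range_eq_of_orderPattern_eq {x : ι → α} {y : ι → β}
    (h : orderPattern x = orderPattern y) : (range x).ncard = (range y).ncard := by
  have ker_eq : Setoid.ker x = Setoid.ker y := Setoid.ext (eq_iff_eq_of_orderPattern_eq h)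
  calc (range x).ncard = Nat.card (Quotient (Setoid.ker x)) :=
        (Nat.card_congr (Setoid.quotientKerEquivRange x)).symm
    _ = Nat.card (Quotient (Setoid.ker y)) := by rw [ker_eq]
    _ = (range y).ncard := Nat.card_congr (Setoid.quotientKerEquivRange y)

theorem eq_of_orderPattern_eq_of_range_eq {x y : ι → α} [WellFoundedLT (range x)]
    (hpattern : orderPattern x = orderPattern y) (hrange : range x = range y) : x = y := by
  let φ : range x → α := y ∘ rangeSplitting x
  have φ_apply (i : ι) : φ ⟨x i, mem_range_self i⟩ = y i :=
    (eq_iff_eq_of_orderPattern_eq hpattern _ _).1 (apply_rangeSplitting x _)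
  have φ_strictMono : StrictMono φ := fun a b hab =>
    (lt_iff_lt_of_orderPattern_eq hpattern _ _).1 <| by
      simpa only [apply_rangeSplitting, Subtype.coe_lt_coe] using hab
  have range_φ : range φ = range y :=
    (range_comp_subset_range _ _).antisymm <|
      range_subset_iff.2 fun i => ⟨⟨x i, mem_range_self i⟩, φ_apply i⟩
  have φ_eq_val : φ = Subtype.val :=
    (φ_strictMono.range_inj (Subtype.strictMono_coe _)).1 <| by
      rw [range_φ, ← hrange, Subtype.range_coe]
  funext i
  rw [← φ_apply, φ_eq_val]

theorem stmt0_general {X : Type*} [Finite ι] [Infinite α] (f : (ι → α) → X)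
    (hf : (range f).Finite) :
    ∃ H : Set α, H.Infinite ∧
      ∀ x y : ι → α, (∀ i, x i ∈ H) → (∀ i, y i ∈ H) → orderPattern x = orderPattern y →
        f x = f y := by
  have := hf.to_subtype
  let c (s : Finset α) (p : ι → ι → Prop) : Set (range f) :=
    rangeFactorization f '' {x | range x = s ∧ orderPattern x = p}
  obtain ⟨H, hinf, hH⟩ := exists_infinite_homogeneous c (Nat.card ι)
  refine ⟨H, hinf, fun x y hx hy hxy => ?_⟩
  let coords (z : ι → α) : Finset α := (finite_range z).toFinset
  have coe_coords (z : ι → α) : (coords z : Set α) = range z := (finite_range z).coe_toFinset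
  have card_coords (z : ι → α) : (coords z).card = (range z).ncard :=
    (ncard_eq_toFinset_card _ _).symm
  have same_color : c (coords x) = c (coords y) := by
    apply hH
    · simpa only [coe_coords, range_subset_iff] using hx
    · simpa only [coe_coords, range_subset_iff] using hy
    · simpa only [card_coords] using ncard_range_eq_of_orderPattern_eq hxy
    · exact (card_coords x).trans_le (Finite.card_range_le x)
  have mem_color : rangeFactorization f x ∈ c (coords y) (orderPattern x) :=
    same_color ▸ mem_image_of_mem _ ⟨(coe_coords x).symm, rfl⟩
  obtain ⟨z, ⟨hrange, hpattern⟩, hzx⟩ := mem_color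
  have z_eq_y : z = y :=
    eq_of_orderPattern_eq_of_range_eq (hpattern.trans hxy) (hrange.trans (coe_coords y))
  calc f x = f z := (congrArg Subtype.val hzx).symm
    _ = f y := by rw [z_eq_y]

end OrderPattern

/-- Ramsey's theorem version: for every `r ≥ 1` and every
`f : N^r → X` with finite image, there is an infinite `H ⊆ N` such that `f` is
constant on the order equivalence classes of `H^r`. -/
theorem stmt0 {X : Type*} (r : ℕ) (hr : 1 ≤ r) (f : (Fin r → ℕ) → X)
    (hf : (Set.range f).Finite) :
    ∃ H : Set ℕ, H.Infinite ∧
      ∀ x y : Fin r → ℕ, (∀ i, x i ∈ H) → (∀ i, y i ∈ H) → OrdEquiv x y →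
        f x = f y := by
  obtain ⟨H, hinf, hH⟩ := stmt0_general f hf
  exact ⟨H, hinf, fun x y hx hy hxy => hH x y hx hy (orderPattern_eq_of_ordEquiv hxy)⟩
end

section
/- Let k ≥ 2 and let G = (N^k, Θ) be a downward directed graph. Then there exists an infinite subset H = {h_0, h_1, ...} ⊆ N (listed in increasing order) such that for all z in D = H^k, either p̂_D(z) = h_0 < min(z) or p̂_D(z) ≥ min(z). Consequently p̂_D has at most one significant label: |{p̂_D(z) : z ∈ D, p̂_D(z) < min(z)}| ≤ 1. -/
open scoped Classical

/-- `(a, b)` is an edge of the induced subgraph `G_D`. -/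
def EdgeD {k : ℕ} (Θ : Set ((Fin k → ℕ) × (Fin k → ℕ))) (D : Set (Fin k → ℕ))
    (a b : Fin k → ℕ) : Prop :=
  a ∈ D ∧ b ∈ D ∧ (a, b) ∈ Θ

/-- A path in `G_D`: a nonempty sequence of distinct vertices of `D` with
consecutive pairs being edges. -/
def IsPathD {k : ℕ} (Θ : Set ((Fin k → ℕ) × (Fin k → ℕ))) (D : Set (Fin k → ℕ))
    (l : List (Fin k → ℕ)) : Prop :=
  l ≠ [] ∧ l.Nodup ∧ (∀ x ∈ l, x ∈ D) ∧ l.Chain' (fun a b => (a, b) ∈ Θ)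

/-- There is a path in `G_D` from `z` to `x` (possibly the trivial path `(z)`). -/
def PathFrom {k : ℕ} (Θ : Set ((Fin k → ℕ) × (Fin k → ℕ))) (D : Set (Fin k → ℕ))
    (z x : Fin k → ℕ) : Prop :=
  ∃ l : List (Fin k → ℕ), IsPathD Θ D l ∧ l.head? = some z ∧ l.getLast? = some x

/-- `z` is a terminal vertex of `G_D`: it has no out-neighbor in `G_D`. -/
def TerminalV {k : ℕ} (Θ : Set ((Fin k → ℕ) × (Fin k → ℕ))) (D : Set (Fin k → ℕ))
    (z : Fin k → ℕ) : Prop :=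
  ∀ y, ¬ EdgeD Θ D z y

/-- `P_D(z)`: the set of vertices reachable from `z` by a path in `G_D`. -/
def PD {k : ℕ} (Θ : Set ((Fin k → ℕ) × (Fin k → ℕ))) (D : Set (Fin k → ℕ))
    (z : Fin k → ℕ) : Set (Fin k → ℕ) :=
  {x | PathFrom Θ D z x}

/-- The total path label `p_D(z) = min { min(x) : x ∈ P_D(z) }`. -/
noncomputable def pD {k : ℕ} (Θ : Set ((Fin k → ℕ) × (Fin k → ℕ))) (D : Set (Fin k → ℕ))
    (z : Fin k → ℕ) : ℕ :=
  sInf {n | ∃ x ∈ PD Θ D z, minv x = n}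

/-- `p̂_D(z) = max(z)` if `z` is terminal in `G_D`, else `p̂_D(z) = p_D(z)`. -/
noncomputable def phatD {k : ℕ} (Θ : Set ((Fin k → ℕ) × (Fin k → ℕ))) (D : Set (Fin k → ℕ))
    (z : Fin k → ℕ) : ℕ :=
  if TerminalV Θ D z then maxv z else pD Θ D z

/-- A terminal path of `G_D`: a path that cannot be extended. -/
def IsTermPathD {k : ℕ} (Θ : Set ((Fin k → ℕ) × (Fin k → ℕ))) (D : Set (Fin k → ℕ))
    (l : List (Fin k → ℕ)) : Prop :=
  IsPathD Θ D l ∧ ∀ x, ¬ IsPathD Θ D (l ++ [x])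

/-- `T_D(z)`: the set of last vertices of terminal paths of `G_D` starting at `z`. -/
def TD {k : ℕ} (Θ : Set ((Fin k → ℕ) × (Fin k → ℕ))) (D : Set (Fin k → ℕ))
    (z : Fin k → ℕ) : Set (Fin k → ℕ) :=
  {x | ∃ l : List (Fin k → ℕ), IsTermPathD Θ D l ∧ l.head? = some z ∧ l.getLast? = some x}

/-- The terminal path label function `t̂_D`:
`t̂_D(z) = max(z)` if `z` is terminal, else `t̂_D(z) = min { min(x) : x ∈ T_D(z) }`. -/
noncomputable def tD {k : ℕ} (Θ : Set ((Fin k → ℕ) × (Fin k → ℕ))) (D : Set (Fin k → ℕ))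
    (z : Fin k → ℕ) : ℕ :=
  if TerminalV Θ D z then maxv z else sInf {n | ∃ x ∈ TD Θ D z, minv x = n}

/-!
By Ramsey's theorem there is an infinite `H ⊆ ℕ` on which membership of `(x, y)` in `Θ` depends only
on the order type of the pair. Let `z ∈ H^k` have label `m = p_D(z) < min z`, attained at a vertex
`x` reachable from `z`. All coordinates of vertices reachable from `z` are at least `m`, so replacing
the value `m` by `h₀ = min H` preserves their order types, hence the edges between them; it also
fixes `z`, as `m < min z`. The image of `x` is therefore reachable from `z`, and its minimum is `h₀`,
so `m ≤ h₀` by minimality.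
-/

section Ramsey

variable {α κ : Type*}

theorem exists_endHomogeneous_seq {n : ℕ} {c : Finset α → κ}
    (hc : ∀ (a : α) (X : Set α), X.Infinite → ∃ Y ⊆ X, Y.Infinite ∧
      ∃ d, ∀ s : Finset α, ↑s ⊆ Y → s.card = n → c (insert a s) = d)
    {A : Set α} (hA : A.Infinite) :
    ∃ (a : ℕ → α) (d : ℕ → κ), a.Injective ∧ (∀ i, a i ∈ A) ∧
      ∀ i (s : Finset α), ↑s ⊆ a '' Set.Ioi i → s.card = n → c (insert (a i) s) = d i := by
  have step (X : {X : Set α // X.Infinite}) : ∃ a ∈ X.1, ∃ Y : {Y : Set α // Y.Infinite},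
      Y.1 ⊆ X.1 \ {a} ∧ ∃ d, ∀ s : Finset α, ↑s ⊆ Y.1 → s.card = n → c (insert a s) = d := by
    obtain ⟨a, ha⟩ := X.2.nonempty
    obtain ⟨Y, hYX, hY, hd⟩ := hc a (X.1 \ {a}) (X.2.sdiff (Set.finite_singleton a))
    exact ⟨a, ha, ⟨Y, hY⟩, hYX, hd⟩
  choose pt hpt next hnext color hcolor using step
  let S (i : ℕ) : {X : Set α // X.Infinite} := next^[i] ⟨A, hA⟩
  have hS (i : ℕ) : S (i + 1) = next (S i) := Function.iterate_succ_apply' next i _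
  have hS_succ (i : ℕ) : (S (i + 1)).1 ⊆ (S i).1 \ {pt (S i)} := hS i ▸ hnext (S i)
  have hS_anti : Antitone fun i => (S i).1 :=
    antitone_nat_of_succ_le fun i => (hS_succ i).trans Set.sdiff_subset
  have pt_mem {i j : ℕ} (hij : i < j) : pt (S j) ∈ (S (i + 1)).1 := hS_anti hij (hpt (S j))
  refine ⟨fun i => pt (S i), fun i => color (S i), ?_, fun i => hS_anti i.zero_le (hpt (S i)), ?_⟩
  · exact .of_lt_imp_ne fun i j hij heq => (hS_succ i (pt_mem hij)).2 heq.symm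
  · intro i s hs hcard
    refine hcolor (S i) s (hs.trans ?_) hcard
    rintro _ ⟨j, hij, rfl⟩
    exact hS i ▸ pt_mem hij

theorem exists_infinite_monochromatic [Finite κ] (n : ℕ) (c : Finset α → κ) {A : Set α}
    (hA : A.Infinite) :
    ∃ B ⊆ A, B.Infinite ∧ ∃ d, ∀ s : Finset α, ↑s ⊆ B → s.card = n → c s = d := by
  induction n generalizing c A with
  | zero => exact ⟨A, subset_rfl, hA, c ∅, fun s _ hs => by rw [Finset.card_eq_zero.mp hs]⟩
  | succ n ih =>
    obtain ⟨a, d, ha, haA, hd⟩ :=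
      exists_endHomogeneous_seq (fun x _ hX => ih (fun s => c (insert x s)) hX) hA
    obtain ⟨d₀, hd₀⟩ := Finite.exists_infinite_fiber d
    refine ⟨a '' (d ⁻¹' {d₀}), Set.image_subset_iff.2 fun i _ => haA i,
      (Set.infinite_coe_iff.1 hd₀).image ha.injOn, d₀, fun s hs hcard => ?_⟩
    obtain ⟨t, ht, rfl⟩ := Finset.subset_set_image_iff.1 hs
    rw [Finset.card_image_of_injective t ha] at hcard
    have ht_ne : t.Nonempty := Finset.card_pos.1 (by omega)
    let i := t.min' ht_ne
    have hi : i ∈ t := t.min'_mem ht_ne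
    have htail : ↑((t.erase i).image a) ⊆ a '' Set.Ioi i := by
      rw [Finset.coe_image]
      exact Set.image_mono fun j hj => t.min'_lt_of_mem_erase_min' ht_ne hj
    have htail_card : ((t.erase i).image a).card = n := by
      rw [Finset.card_image_of_injective _ ha, Finset.card_erase_of_mem hi, hcard,
        Nat.add_sub_cancel]
    calc c (t.image a) = c (insert (a i) ((t.erase i).image a)) := by
          rw [← Finset.image_insert, Finset.insert_erase hi]
      _ = d i := hd i _ htail htail_card
      _ = d₀ := ht hi

theorem exists_infinite_color_eq_of_card_eq [Infinite α] [Finite κ] (c : Finset α → κ) (N : ℕ) :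
    ∃ B : Set α, B.Infinite ∧ ∀ s t : Finset α, ↑s ⊆ B → ↑t ⊆ B → s.card = t.card →
      s.card ≤ N → c s = c t := by
  induction N with
  | zero =>
    refine ⟨Set.univ, Set.infinite_univ, fun s t _ _ hst hs => ?_⟩
    rw [Finset.card_eq_zero.1 (Nat.le_zero.1 hs), Finset.card_eq_zero.1 (by omega : t.card = 0)]
  | succ N ih =>
    obtain ⟨A, hA, hAc⟩ := ih
    obtain ⟨B, hBA, hB, d, hd⟩ := exists_infinite_monochromatic (N + 1) c hA
    refine ⟨B, hB, fun s t hs ht hst hle => ?_⟩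
    rcases hle.eq_or_lt with hs_card | hs_card
    · rw [hd s hs hs_card, hd t ht (hst ▸ hs_card)]
    · exact hAc s t (hs.trans hBA) (ht.trans hBA) hst (Nat.le_of_lt_succ hs_card)

end Ramsey

section Tuples

variable {m n : ℕ} {α β : Type*}

theorem comp_finAppend (φ : α → β) (u : Fin m → α) (v : Fin n → α) :
    φ ∘ Fin.append u v = Fin.append (φ ∘ u) (φ ∘ v) :=
  funext (Fin.addCases (by simp) (by simp))

theorem forall_finAppend_mem {S : Set α} {u : Fin m → α} {v : Fin n → α}
    (hu : ∀ i, u i ∈ S) (hv : ∀ i, v i ∈ S) : ∀ i, Fin.append u v i ∈ S :=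
  Fin.addCases (by simpa using hu) (by simpa using hv)

end Tuples

section OrderInvariance

theorem eq_of_range_eq_of_lt_iff_lt {ι α : Type*} [LinearOrder α] [WellFoundedLT α] {f g : ι → α}
    (hrange : Set.range f = Set.range g) (hlt : ∀ i j, f i < f j ↔ g i < g j) : f = g := by
  suffices h : ∀ a i, f i = a → g i = f i from funext fun i => (h _ i rfl).symm
  intro a
  induction a using WellFoundedLT.induction with
  | ind a ih =>
    rintro i rfl
    rcases lt_trichotomy (g i) (f i) with hi | hi | hi
    · obtain ⟨j, hj⟩ : g i ∈ Set.range f := hrange ▸ Set.mem_range_self i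
      have hji : f j < f i := hj ▸ hi
      have hgj : g j = g i := (ih _ hji j rfl).trans hj
      exact absurd ((hlt j i).1 hji) hgj.not_lt
    · exact hi
    · obtain ⟨j, hj⟩ : f i ∈ Set.range g := hrange ▸ Set.mem_range_self i
      have hji : f j < f i := (hlt j i).2 (hj ▸ hi)
      exact absurd ((ih _ hji j rfl).symm.trans hj) hji.ne

variable {n : ℕ} {f g : Fin n → ℕ}

theorem OrdEquiv.card_image_eq (h : OrdEquiv f g) :
    (Finset.univ.image f).card = (Finset.univ.image g).card := by
  have card_image (f : Fin n → ℕ) :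
      (Finset.univ.image f).card = Nat.card (Quotient (Setoid.ker f)) := by
    rw [Nat.card_congr (Setoid.quotientKerEquivRange f), Nat.card_coe_set_eq,
      ← Set.ncard_coe_finset, Finset.coe_image, Finset.coe_univ, Set.image_univ]
  have ker_eq : Setoid.ker f = Setoid.ker g := Setoid.ext fun i j => (h i j).2
  rw [card_image, card_image, ker_eq]

theorem ordEquiv_comp_of_strictMonoOn {φ : ℕ → ℕ} {S : Set ℕ} (hφ : StrictMonoOn φ S)
    (hf : ∀ i, f i ∈ S) : OrdEquiv f (φ ∘ f) := fun i j =>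
  ⟨(hφ.lt_iff_lt (hf i) (hf j)).symm, (hφ.injOn.eq_iff (hf i) (hf j)).symm⟩

theorem strictMonoOn_update_id_Ici {α : Type*} [Preorder α] [DecidableEq α] {a m : α}
    (ham : a ≤ m) : StrictMonoOn (Function.update id m a) (Set.Ici m) := by
  intro u (hu : m ≤ u) v _ huv
  rw [Function.update_of_ne (hu.trans_lt huv).ne']
  rcases eq_or_ne u m with rfl | hum
  · simpa using ham.trans_lt huv
  · simpa [hum] using huv

/-- A relation `R` on `ℕ` is order invariant on `H` if for tuples with entries in `H` membership in
`R` depends only on the order type of the tuple. -/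
def OrderInvariantOn (R : Set (Fin n → ℕ)) (H : Set ℕ) : Prop :=
  ∀ ⦃f g : Fin n → ℕ⦄, (∀ i, f i ∈ H) → (∀ i, g i ∈ H) → OrdEquiv f g → f ∈ R → g ∈ R

theorem exists_infinite_orderInvariantOn (R : Set (Fin n → ℕ)) :
    ∃ H : Set ℕ, H.Infinite ∧ OrderInvariantOn R H := by
  let c (s : Finset ℕ) : Set (Fin n → Fin n → Prop) :=
    {T | ∃ f ∈ R, Set.range f = s ∧ T = fun i j => f i < f j}
  obtain ⟨H, hH, hc⟩ := exists_infinite_color_eq_of_card_eq c n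
  have image_subset {f : Fin n → ℕ} (hf : ∀ i, f i ∈ H) : ↑(Finset.univ.image f) ⊆ H := by
    simpa [Set.range_subset_iff] using hf
  refine ⟨H, hH, fun f g hf hg hfg hfR => ?_⟩
  have hcolor : c (Finset.univ.image f) = c (Finset.univ.image g) :=
    hc _ _ (image_subset hf) (image_subset hg) hfg.card_image_eq
      (Finset.card_image_le.trans_eq (Finset.card_fin n))
  have hmem : (fun i j => f i < f j) ∈ c (Finset.univ.image f) := ⟨f, hfR, by simp, rfl⟩
  rw [hcolor] at hmem
  obtain ⟨g', hg'R, hrange, hlt⟩ := hmem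
  have hg' : g' = g := by
    refine eq_of_range_eq_of_lt_iff_lt (by simpa using hrange) fun i j => ?_
    rw [← (hfg i j).1]
    exact (iff_of_eq (congrFun₂ hlt i j)).symm
  exact hg' ▸ hg'R

end OrderInvariance

section Reachability

variable {k : ℕ} {Θ : Set ((Fin k → ℕ) × (Fin k → ℕ))} {D : Set (Fin k → ℕ)} {x y z : Fin k → ℕ}

theorem minv_le (z : Fin k → ℕ) (i : Fin k) : minv z ≤ z i := Nat.sInf_le ⟨i, rfl⟩

theorem exists_eq_minv [NeZero k] (z : Fin k → ℕ) : ∃ i, z i = minv z :=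
  Nat.sInf_mem (Set.range_nonempty z)

theorem minv_le_maxv [NeZero k] (z : Fin k → ℕ) : minv z ≤ maxv z :=
  (minv_le z 0).trans (Finset.le_sup (Finset.mem_univ 0))

theorem pathFrom_refl (hz : z ∈ D) : PathFrom Θ D z z :=
  ⟨[z], ⟨by simp, by simp, by simpa using hz, List.IsChain.singleton z⟩, rfl, rfl⟩

theorem PathFrom.head (hzy : EdgeD Θ D z y) (hyx : PathFrom Θ D y x) : PathFrom Θ D z x := by
  obtain ⟨l, ⟨hne, hnodup, hD, hchain⟩, hhead, hlast⟩ := hyx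
  by_cases hz : z ∈ l
  · -- A path from `y` already through `z` is shortened to its part from `z` on.
    obtain ⟨s, t, rfl⟩ := List.append_of_mem hz
    refine ⟨z :: t, ⟨List.cons_ne_nil z t, hnodup.of_append_right,
      fun w hw => hD w (List.mem_append_right s hw), hchain.right_of_append⟩, rfl, ?_⟩
    simpa [List.getLast?_append] using hlast
  · refine ⟨z :: l, ⟨List.cons_ne_nil z l, List.nodup_cons.2 ⟨hz, hnodup⟩,
      List.forall_mem_cons.2 ⟨hzy.1, hD⟩, hchain.cons fun w hw => ?_⟩, rfl, ?_⟩
    · obtain rfl : y = w := by simpa [hhead] using hw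
      exact hzy.2.2
    · simp [List.getLast?_cons, hlast]

theorem PathFrom.mem_right (h : PathFrom Θ D z x) : x ∈ D := by
  obtain ⟨l, ⟨-, -, hD, -⟩, -, hlast⟩ := h
  exact hD x (List.mem_of_getLast? hlast)

theorem pathFrom_iff_reflTransGen :
    PathFrom Θ D z x ↔ z ∈ D ∧ Relation.ReflTransGen (EdgeD Θ D) z x := by
  constructor
  · rintro ⟨l, ⟨hne, -, hD, hchain⟩, hhead, hlast⟩
    have hedges : l.IsChain (EdgeD Θ D) :=
      List.IsChain.imp_of_mem_imp (fun a b ha hb hab => ⟨hD a ha, hD b hb, hab⟩) hchain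
    obtain rfl : l.head hne = z := by simpa [List.head?_eq_some_head hne] using hhead
    obtain rfl : l.getLast hne = x := by simpa [List.getLast?_eq_some_getLast hne] using hlast
    exact ⟨hD _ (l.head_mem hne), List.relationReflTransGen_of_exists_isChain l hedges hne⟩
  · rintro ⟨hz, hzx⟩
    have hx : x ∈ D := by
      rcases hzx.cases_tail with rfl | ⟨_, _, hedge⟩
      · exact hz
      · exact hedge.2.1
    exact hzx.head_induction_on (pathFrom_refl hx) fun hedge _ ih => ih.head hedge

theorem pD_le_minv (h : x ∈ PD Θ D z) : pD Θ D z ≤ minv x := Nat.sInf_le ⟨x, h, rfl⟩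

theorem exists_minv_eq_pD (hz : z ∈ D) : ∃ x ∈ PD Θ D z, minv x = pD Θ D z :=
  Nat.sInf_mem (s := {n | ∃ x ∈ PD Θ D z, minv x = n}) ⟨minv z, z, pathFrom_refl hz, rfl⟩

end Reachability

section Regularity

variable {k : ℕ} {Θ : Set ((Fin k → ℕ) × (Fin k → ℕ))} {H : Set ℕ} {x y z : Fin k → ℕ}

/-- The cube `H^k` of `k`-tuples with entries in `H`. -/
abbrev cube (k : ℕ) (H : Set ℕ) : Set (Fin k → ℕ) := {x | ∀ i, x i ∈ H}

/-- The edge set `Θ` of a graph on `ℕ^k` as a relation of arity `2k`: the edge `(x, y)` becomes the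
concatenation of `x` and `y`, so that order invariance applies to the pair. -/
def edgeTuples (Θ : Set ((Fin k → ℕ) × (Fin k → ℕ))) : Set (Fin (k + k) → ℕ) :=
  {f | (f ∘ Fin.castAdd k, f ∘ Fin.natAdd k) ∈ Θ}

theorem append_mem_edgeTuples : Fin.append x y ∈ edgeTuples Θ ↔ (x, y) ∈ Θ := by
  have hleft : Fin.append x y ∘ Fin.castAdd k = x := funext (Fin.append_left x y)
  have hright : Fin.append x y ∘ Fin.natAdd k = y := funext (Fin.append_right x y)
  rw [edgeTuples, Set.mem_ofPred_eq, hleft, hright]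

theorem EdgeD.comp {φ : ℕ → ℕ} {S : Set ℕ} (hinv : OrderInvariantOn (edgeTuples Θ) H)
    (hφ : StrictMonoOn φ S) (hφH : Set.MapsTo φ H H) (hx : ∀ i, x i ∈ S) (hy : ∀ i, y i ∈ S)
    (hxy : EdgeD Θ (cube k H) x y) : EdgeD Θ (cube k H) (φ ∘ x) (φ ∘ y) := by
  obtain ⟨hxH, hyH, hxyΘ⟩ := hxy
  have hφxH : φ ∘ x ∈ cube k H := fun i => hφH (hxH i)
  have hφyH : φ ∘ y ∈ cube k H := fun i => hφH (hyH i)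
  have hord : OrdEquiv (Fin.append x y) (Fin.append (φ ∘ x) (φ ∘ y)) :=
    comp_finAppend φ x y ▸ ordEquiv_comp_of_strictMonoOn hφ (forall_finAppend_mem hx hy)
  exact ⟨hφxH, hφyH, append_mem_edgeTuples.1 <| hinv (forall_finAppend_mem hxH hyH)
    (forall_finAppend_mem hφxH hφyH) hord (append_mem_edgeTuples.2 hxyΘ)⟩

theorem comp_mem_PD {φ : ℕ → ℕ} {S : Set ℕ} (hinv : OrderInvariantOn (edgeTuples Θ) H)
    (hφ : StrictMonoOn φ S) (hφH : Set.MapsTo φ H H)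
    (hS : ∀ w ∈ PD Θ (cube k H) z, ∀ i, w i ∈ S) (hx : x ∈ PD Θ (cube k H) z) :
    φ ∘ x ∈ PD Θ (cube k H) (φ ∘ z) := by
  obtain ⟨hz, hzx⟩ := pathFrom_iff_reflTransGen.1 hx
  have hreach {w : Fin k → ℕ} (hzw : Relation.ReflTransGen (EdgeD Θ (cube k H)) z w) :
      w ∈ PD Θ (cube k H) z := pathFrom_iff_reflTransGen.2 ⟨hz, hzw⟩
  refine pathFrom_iff_reflTransGen.2 ⟨fun i => hφH (hz i), ?_⟩
  clear hx
  induction hzx with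
  | refl => exact .refl
  | tail hzw hwx ih =>
    exact ih.tail (hwx.comp hinv hφ hφH (hS _ (hreach hzw)) (hS _ (hreach (hzw.tail hwx))))

theorem pD_eq_sInf_of_pD_lt_minv [NeZero k] (hinv : OrderInvariantOn (edgeTuples Θ) H)
    (hz : z ∈ cube k H) (hlt : pD Θ (cube k H) z < minv z) :
    pD Θ (cube k H) z = sInf H := by
  obtain ⟨x, hx, hxm⟩ := exists_minv_eq_pD (Θ := Θ) hz
  obtain ⟨j, hj⟩ := exists_eq_minv x
  set m := pD Θ (cube k H) z
  have hxj : x j = m := hj.trans hxm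
  have hmH : m ∈ H := hxj ▸ hx.mem_right j
  let φ : ℕ → ℕ := Function.update id m (sInf H)
  have hφ : StrictMonoOn φ (Set.Ici m) := strictMonoOn_update_id_Ici (Nat.sInf_le hmH)
  have hφH : Set.MapsTo φ H H := by
    intro v hv
    rcases eq_or_ne v m with rfl | hvm
    · simpa [φ] using Nat.sInf_mem ⟨_, hmH⟩
    · simpa [φ, hvm] using hv
  have hφz : φ ∘ z = z :=
    funext fun i => Function.update_of_ne (hlt.trans_le (minv_le z i)).ne' _ _
  have hφx : φ ∘ x ∈ PD Θ (cube k H) z := hφz ▸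
    comp_mem_PD hinv hφ hφH (fun w hw i => (pD_le_minv hw).trans (minv_le w i)) hx
  refine le_antisymm ?_ (Nat.sInf_le hmH)
  calc m ≤ minv (φ ∘ x) := pD_le_minv hφx
    _ ≤ φ (x j) := minv_le (φ ∘ x) j
    _ = sInf H := by rw [hxj]; exact Function.update_self ..

theorem phatD_eq_sInf_of_phatD_lt_minv [NeZero k] (hinv : OrderInvariantOn (edgeTuples Θ) H)
    (hz : z ∈ cube k H) (hlt : phatD Θ (cube k H) z < minv z) :
    phatD Θ (cube k H) z = sInf H := by
  by_cases hterm : TerminalV Θ (cube k H) z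
  · rw [phatD, if_pos hterm] at hlt
    exact absurd hlt (minv_le_maxv z).not_gt
  · rw [phatD, if_neg hterm] at hlt ⊢
    exact pD_eq_sInf_of_pD_lt_minv hinv hz hlt

theorem stmt1_general [NeZero k] (Θ : Set ((Fin k → ℕ) × (Fin k → ℕ))) :
    ∃ H : Set ℕ, H.Infinite ∧
      (∀ z ∈ cube k H, (phatD Θ (cube k H) z = sInf H ∧ sInf H < minv z) ∨
        minv z ≤ phatD Θ (cube k H) z) ∧
      {n : ℕ | ∃ z ∈ cube k H, phatD Θ (cube k H) z = n ∧ n < minv z}.Subsingleton := by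
  obtain ⟨H, hH, hinv⟩ := exists_infinite_orderInvariantOn (edgeTuples Θ)
  refine ⟨H, hH, fun z hz => ?_, ?_⟩
  · refine (lt_or_ge (phatD Θ (cube k H) z) (minv z)).imp_left fun hlt => ?_
    have heq := phatD_eq_sInf_of_phatD_lt_minv hinv hz hlt
    exact ⟨heq, heq ▸ hlt⟩
  · rintro _ ⟨z, hz, rfl, hlt⟩ _ ⟨z', hz', rfl, hlt'⟩
    rw [phatD_eq_sInf_of_phatD_lt_minv hinv hz hlt, phatD_eq_sInf_of_phatD_lt_minv hinv hz' hlt']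

end Regularity

/-- `p̂_D` large scale regularity: for `k ≥ 2` and a downward
directed graph `G = (N^k, Θ)` there is an infinite `H ⊆ N` (with least element
`h_0 = sInf H`) such that, with `D = H^k`, every `z ∈ D` satisfies either
`p̂_D(z) = h_0 < min(z)` or `p̂_D(z) ≥ min(z)`; consequently `p̂_D` has at most
one significant label. -/
theorem stmt1 (k : ℕ) (hk : 2 ≤ k) (Θ : Set ((Fin k → ℕ) × (Fin k → ℕ)))
    (hΘ : Downward Θ) :
    ∃ H : Set ℕ, H.Infinite ∧
      (∀ z : Fin k → ℕ, (∀ i, z i ∈ H) →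
        (phatD Θ {x | ∀ i, x i ∈ H} z = sInf H ∧ sInf H < minv z) ∨
        minv z ≤ phatD Θ {x | ∀ i, x i ∈ H} z) ∧
      {n : ℕ | ∃ z : Fin k → ℕ, (∀ i, z i ∈ H) ∧
        phatD Θ {x | ∀ i, x i ∈ H} z = n ∧ n < minv z}.Subsingleton := by
  have : NeZero k := ⟨by omega⟩
  exact stmt1_general Θ
end
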